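/- arXiv:1612.07345 — 2 statements merged into one kernel-verified Lean document; each statement's English description precedes it below -/
import Mathlib

section
/- (Formal Nullstellensatz.) For every finite subset X of L × B and all pairs (y₁,b₁),…,(y_k,b_k) ∈ L × B, the following are equivalent: (1) X ⊢ {(y₁,b₁),…,(y_k,b_k)}; (2) for all b₁',…,b_k' ∈ B with b₁' ≠ b₁,…,b_k' ≠ b_k, there exists an atom e of B such that ⋀_{a ≥ e} ⋀ (X ∪ {(y₁,b₁'),…,(y_k,b_k')})_a ≤ ⋁_{a ≥ e} ⋁ (X ∪ {(y₁,b₁'),…,(y_k,b_k')})_{-a} holds in L. -/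
/-- An entailment relation on a set `S`: a relation between finite subsets of `S`
satisfying reflexivity (R), monotonicity (M) and transitivity/cut (T). -/
def IsEntailment {S : Type*} [DecidableEq S] (E : Finset S → Finset S → Prop) : Prop :=
  (∀ X Y : Finset S, (∃ x, x ∈ X ∧ x ∈ Y) → E X Y) ∧
  (∀ X X' Y Y' : Finset S, E X Y → E (X ∪ X') (Y ∪ Y')) ∧
  (∀ X Y : Finset S, ∀ z : S, E X (insert z Y) → E (insert z X) Y → E X Y)

variable (M : Type*) (D : Type*) [Lattice M] [BoundedOrder M] [Lattice D] [BoundedOrder D]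
  [Fintype D] [DecidableEq M] [DecidableEq D]

/-- The generating axioms (s), (∧), (∨), (0), (1), (t) for the entailment relation
of `D`-valued lattice maps on `M`. -/
def LatticeAxioms : Finset (M × D) → Finset (M × D) → Prop := fun X Y =>
  (∃ x a b, a ≠ b ∧ X = {(x, a), (x, b)} ∧ Y = ∅) ∨
  (∃ x y a b, X = {(x, a), (y, b)} ∧ Y = {(x ⊓ y, a ⊓ b)}) ∨
  (∃ x y a b, X = {(x, a), (y, b)} ∧ Y = {(x ⊔ y, a ⊔ b)}) ∨
  (X = ∅ ∧ Y = {((⊥ : M), (⊥ : D))}) ∨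
  (X = ∅ ∧ Y = {((⊤ : M), (⊤ : D))}) ∨
  (∃ x : M, X = ∅ ∧ Y = Finset.univ.image (fun a : D => (x, a)))

/-- The least entailment relation on `M × D` containing all the generating axioms:
the entailment relation of `D`-valued lattice maps on `M`. -/
def LatticeEntails (X Y : Finset (M × D)) : Prop :=
  ∀ E : Finset (M × D) → Finset (M × D) → Prop,
    IsEntailment E → (∀ X' Y', LatticeAxioms M D X' Y' → E X' Y') → E X Y

/-- `⋀_{a ≥ e} ⋀ X_a`: the meet in `L` over all `x` with `(x, a) ∈ X` for some `a ≥ e`;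
the empty meet is `⊤`. -/
def atomMeet {L B : Type*} [Lattice L] [OrderTop L] [BooleanAlgebra B] [DecidableRel ((· ≤ ·) : B → B → Prop)]
    (e : B) (X : Finset (L × B)) : L :=
  (X.filter fun p => e ≤ p.2).inf Prod.fst

/-- `⋁_{a ≥ e} ⋁ X_{-a}`: the join in `L` over all `x` with `(x, aᶜ) ∈ X` for some `a ≥ e`;
the empty join is `⊥`. -/
def atomJoin {L B : Type*} [Lattice L] [OrderBot L] [BooleanAlgebra B] [DecidableRel ((· ≤ ·) : B → B → Prop)]
    (e : B) (X : Finset (L × B)) : L :=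
  (X.filter fun p => e ≤ p.2ᶜ).sup Prod.fst

/-!
Read an entailment `X ⊢ Y` as the clause `⋀ X → ⋁ Y` on subsets of `S`. By the Teichmüller–Tukey
lemma an entailment relation is complete for the subsets satisfying its clauses, and the subsets of
`L × B` satisfying the generating axioms are exactly the graphs of bounded lattice homomorphisms
`L → B`. Hence `X ⊢ {(y₁, b₁), …, (y_k, b_k)}` says that no homomorphism agrees with `X` and misses
every `(yᵢ, bᵢ)`, i.e. that no `X ∪ {(y₁, b₁'), …, (y_k, b_k')}` with all `bᵢ' ≠ bᵢ` extends to a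
homomorphism.

Since a finite `B` is the powerset of its atoms, a homomorphism `L → B` is a family of prime ideals
of `L` indexed by the atoms `e`, namely `{x | ¬ e ≤ f x}`. It agrees with a finite set `Z` iff each
of these ideals contains `atomJoin e Z` but not `atomMeet e Z`, and the prime ideal theorem provides
such an ideal iff `¬ atomMeet e Z ≤ atomJoin e Z`.
-/

/-- The models of a relation `E` between finite sets, each instance `E A C` being read as the clause
`⋀ A → ⋁ C`: the sets `m` such that every such `A` contained in `m` forces `C` to meet `m`. -/
def IsModel {S : Type*} (E : Finset S → Finset S → Prop) (m : Set S) : Prop :=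
  ∀ ⦃A C : Finset S⦄, E A C → (A : Set S) ⊆ m → ∃ c ∈ C, c ∈ m

/-- The sets no finite part of which entails `Y`: the candidates for a model of `E` that is disjoint
from `Y`. -/
def nonEntailing {S : Type*} (E : Finset S → Finset S → Prop) (Y : Finset S) : Set (Set S) :=
  {m | ∀ A : Finset S, (A : Set S) ⊆ m → ¬ E A Y}

section Completeness

variable {S : Type*} {E : Finset S → Finset S → Prop} {X Y : Finset S} {m : Set S}

theorem isOfFiniteCharacter_nonEntailing : Order.IsOfFiniteCharacter (nonEntailing E Y) := fun _ =>
  ⟨fun hm _ hn _ A hA => hm A (hA.trans hn),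
    fun hm A hA => hm A hA A.finite_toSet A subset_rfl⟩

variable [DecidableEq S]

theorem isEntailment_of_set (m : Set S) :
    IsEntailment fun A C : Finset S => (A : Set S) ⊆ m → ∃ c ∈ C, c ∈ m := by
  refine ⟨fun A C ⟨x, hxA, hxC⟩ hA => ⟨x, hxC, hA hxA⟩, fun A A' C C' h hA => ?_,
    fun A C z h₁ h₂ hA => ?_⟩
  · obtain ⟨c, hc, hcm⟩ := h fun x hx => hA (Finset.mem_union_left A' hx)
    exact ⟨c, Finset.mem_union_left C' hc, hcm⟩
  · obtain ⟨c, hc, hcm⟩ := h₁ hA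
    obtain rfl | hc := Finset.mem_insert.1 hc
    · exact h₂ (by simpa only [Finset.coe_insert, Set.insert_subset_iff] using ⟨hcm, hA⟩)
    · exact ⟨c, hc, hcm⟩

namespace IsEntailment

theorem mono (hE : IsEntailment E) {X' Y' : Finset S} (hX : X ⊆ X') (hY : Y ⊆ Y') (h : E X Y) :
    E X' Y' := by
  simpa only [Finset.union_eq_right.2 hX, Finset.union_eq_right.2 hY] using hE.2.1 X X' Y Y' h

theorem notMem_of_mem_nonEntailing (hE : IsEntailment E) (hm : m ∈ nonEntailing E Y) {y : S}
    (hy : y ∈ Y) : y ∉ m := fun hym =>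
  hm {y} (by simpa only [Finset.coe_singleton, Set.singleton_subset_iff] using hym)
    (hE.1 _ _ ⟨y, Finset.mem_singleton_self y, hy⟩)

theorem exists_insert_of_maximal (hE : IsEntailment E) (hm : Maximal (· ∈ nonEntailing E Y) m)
    {c : S} (hc : c ∉ m) : ∃ F : Finset S, (F : Set S) ⊆ m ∧ E (insert c F) Y := by
  have hins : insert c m ∉ nonEntailing E Y := fun h =>
    hc (hm.le_of_ge h (Set.subset_insert c m) (Set.mem_insert c m))
  simp only [nonEntailing, Set.mem_ofPred_eq, not_forall, not_not] at hins
  obtain ⟨G, hG, hGY⟩ := hins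
  refine ⟨G.erase c, ?_, hE.mono (Finset.insert_erase_subset c G) subset_rfl hGY⟩
  simpa only [Finset.coe_erase, Set.sdiff_singleton_subset_iff] using hG

theorem not_union_of_maximal (hE : IsEntailment E) (hm : Maximal (· ∈ nonEntailing E Y) m)
    {A C : Finset S} (hA : (A : Set S) ⊆ m) (hC : ∀ c ∈ C, c ∉ m) : ¬ E A (C ∪ Y) := by
  induction C using Finset.induction_on generalizing A with
  | empty => simpa only [Finset.empty_union] using hm.prop A hA
  | insert c C _ ih =>
    intro h
    obtain ⟨F, hF, hFY⟩ := hE.exists_insert_of_maximal hm (hC c (Finset.mem_insert_self c C))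
    refine ih (A := A ∪ F) (by simpa only [Finset.coe_union] using Set.union_subset hA hF)
      (fun d hd => hC d (Finset.mem_insert_of_mem hd)) (hE.2.2 _ _ c ?_ ?_)
    · rw [← Finset.insert_union]
      exact hE.mono Finset.subset_union_left subset_rfl h
    · exact hE.mono (Finset.insert_subset_insert c Finset.subset_union_right)
        Finset.subset_union_right hFY

theorem isModel_of_maximal (hE : IsEntailment E) (hm : Maximal (· ∈ nonEntailing E Y) m) :
    IsModel E m := by
  intro A C h hA
  by_contra! hC
  exact hE.not_union_of_maximal hm hA hC (hE.mono subset_rfl Finset.subset_union_left h)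

theorem exists_isModel_of_not (hE : IsEntailment E) (h : ¬ E X Y) :
    ∃ m, IsModel E m ∧ (X : Set S) ⊆ m ∧ ∀ y ∈ Y, y ∉ m := by
  have hX : (X : Set S) ∈ nonEntailing E Y := fun A hA hAY =>
    h (hE.mono (Finset.coe_subset.1 hA) subset_rfl hAY)
  obtain ⟨m, hXm, hm⟩ := isOfFiniteCharacter_nonEntailing.exists_maximal hX
  exact ⟨m, hE.isModel_of_maximal hm, hXm, fun _ => hE.notMem_of_mem_nonEntailing hm.prop⟩

theorem iff_forall_isModel (hE : IsEntailment E) :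
    E X Y ↔ ∀ m, IsModel E m → (X : Set S) ⊆ m → ∃ y ∈ Y, y ∈ m := by
  refine ⟨fun h m hm => hm h, fun h => ?_⟩
  by_contra hXY
  obtain ⟨m, hm, hXm, hYm⟩ := hE.exists_isModel_of_not hXY
  obtain ⟨y, hy, hym⟩ := h m hm hXm
  exact hYm y hy hym

end IsEntailment

end Completeness

section LatticeModels

variable {M D}

theorem isEntailment_latticeEntails : IsEntailment (LatticeEntails M D) :=
  ⟨fun X Y h _ hE _ => hE.1 X Y h,
    fun X X' Y Y' h E hE hax => hE.2.1 X X' Y Y' (h E hE hax),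
    fun X Y z h₁ h₂ E hE hax => hE.2.2 X Y z (h₁ E hE hax) (h₂ E hE hax)⟩

theorem isModel_latticeEntails_iff {m : Set (M × D)} :
    IsModel (LatticeEntails M D) m ↔ IsModel (LatticeAxioms M D) m :=
  ⟨fun hm A C hAC => hm fun _ _ hax => hax A C hAC,
    fun hm _ _ hAC => hAC _ (isEntailment_of_set m) hm⟩

theorem isModel_latticeAxioms_iff {m : Set (M × D)} :
    IsModel (LatticeAxioms M D) m ↔
      (∀ x a b, (x, a) ∈ m → (x, b) ∈ m → a = b) ∧
      (∀ x y a b, (x, a) ∈ m → (y, b) ∈ m → (x ⊓ y, a ⊓ b) ∈ m) ∧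
      (∀ x y a b, (x, a) ∈ m → (y, b) ∈ m → (x ⊔ y, a ⊔ b) ∈ m) ∧
      (⊥, ⊥) ∈ m ∧ (⊤, ⊤) ∈ m ∧ ∀ x, ∃ a, (x, a) ∈ m := by
  constructor
  · intro h
    refine ⟨fun x a b ha hb => ?_, fun x y a b ha hb => ?_, fun x y a b ha hb => ?_, ?_, ?_,
      fun x => ?_⟩
    · by_contra hab
      simpa [Set.insert_subset_iff, ha, hb] using h (.inl ⟨x, a, b, hab, rfl, rfl⟩)
    · simpa [Set.insert_subset_iff, ha, hb] using h (.inr (.inl ⟨x, y, a, b, rfl, rfl⟩))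
    · simpa [Set.insert_subset_iff, ha, hb] using h (.inr (.inr (.inl ⟨x, y, a, b, rfl, rfl⟩)))
    · simpa using h (.inr (.inr (.inr (.inl ⟨rfl, rfl⟩))))
    · simpa using h (.inr (.inr (.inr (.inr (.inl ⟨rfl, rfl⟩)))))
    · simpa using h (.inr (.inr (.inr (.inr (.inr ⟨x, rfl, rfl⟩)))))
  · rintro ⟨unique, inf_mem, sup_mem, bot_mem, top_mem, total⟩ _ _
      (⟨x, a, b, hab, rfl, rfl⟩ | ⟨x, y, a, b, rfl, rfl⟩ | ⟨x, y, a, b, rfl, rfl⟩ | ⟨rfl, rfl⟩ |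
        ⟨rfl, rfl⟩ | ⟨x, rfl, rfl⟩) hA
    · simp only [Finset.coe_pair, Set.pair_subset_iff] at hA
      exact (hab (unique x a b hA.1 hA.2)).elim
    · simp only [Finset.coe_pair, Set.pair_subset_iff] at hA
      exact ⟨_, Finset.mem_singleton_self _, inf_mem x y a b hA.1 hA.2⟩
    · simp only [Finset.coe_pair, Set.pair_subset_iff] at hA
      exact ⟨_, Finset.mem_singleton_self _, sup_mem x y a b hA.1 hA.2⟩
    · exact ⟨_, Finset.mem_singleton_self _, bot_mem⟩
    · exact ⟨_, Finset.mem_singleton_self _, top_mem⟩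
    · obtain ⟨a, ha⟩ := total x
      exact ⟨(x, a), Finset.mem_image_of_mem _ (Finset.mem_univ a), ha⟩

theorem isModel_latticeAxioms_iff_exists_hom {m : Set (M × D)} :
    IsModel (LatticeAxioms M D) m ↔ ∃ f : BoundedLatticeHom M D, m = {p | f p.1 = p.2} := by
  rw [isModel_latticeAxioms_iff]
  constructor
  · rintro ⟨unique, inf_mem, sup_mem, bot_mem, top_mem, total⟩
    choose f hf using total
    have apply_eq {x : M} {a : D} (h : (x, a) ∈ m) : f x = a := unique x _ _ (hf x) h
    refine ⟨{ toFun := f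
              map_inf' := fun x y => apply_eq (inf_mem x y _ _ (hf x) (hf y))
              map_sup' := fun x y => apply_eq (sup_mem x y _ _ (hf x) (hf y))
              map_bot' := apply_eq bot_mem
              map_top' := apply_eq top_mem }, ?_⟩
    ext ⟨x, a⟩
    exact ⟨apply_eq, fun h : f x = a => h ▸ hf x⟩
  · rintro ⟨f, rfl⟩
    exact ⟨fun x a b ha hb => ha.symm.trans hb,
      fun x y a b ha hb => (map_inf f x y).trans (congrArg₂ (· ⊓ ·) ha hb),
      fun x y a b ha hb => (map_sup f x y).trans (congrArg₂ (· ⊔ ·) ha hb),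
      map_bot f, map_top f, fun x => ⟨f x, rfl⟩⟩

theorem latticeEntails_iff_forall_hom {X Y : Finset (M × D)} :
    LatticeEntails M D X Y ↔
      ∀ f : BoundedLatticeHom M D, (∀ p ∈ X, f p.1 = p.2) → ∃ p ∈ Y, f p.1 = p.2 := by
  simp only [isEntailment_latticeEntails.iff_forall_isModel, isModel_latticeEntails_iff,
    isModel_latticeAxioms_iff_exists_hom]
  exact ⟨fun h f => h _ ⟨f, rfl⟩, by rintro h _ ⟨f, rfl⟩; exact h f⟩

end LatticeModels

section Extension

variable {L B : Type*}

/-- The lattice homomorphism into a powerset determined by a family of prime ideals, which sends `x`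
to the set of (indices of) ideals that avoid `x`, as in Stone's representation theorem. -/
def stoneHom {ι : Type*} [Lattice L] [BoundedOrder L] (J : ι → Order.Ideal L)
    (hJ : ∀ i, (J i).IsPrime) : BoundedLatticeHom L (Set ι) where
  toFun x := {i | x ∉ J i}
  map_inf' x y := by
    ext i
    have inf_mem_iff : x ⊓ y ∈ J i ↔ x ∈ J i ∨ y ∈ J i :=
      ⟨(hJ i).mem_or_mem, Or.rec ((J i).lower inf_le_left) ((J i).lower inf_le_right)⟩
    simp [inf_mem_iff]
  map_sup' x y := by
    ext i
    simp [Order.Ideal.sup_mem_iff, imp_iff_not_or]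
  map_bot' := by simp
  map_top' := by
    ext i
    simpa using Order.Ideal.isProper_iff_top_notMem.1 (hJ i).toIsProper

theorem exists_isPrime_of_not_le [DistribLattice L] {a b : L} (h : ¬ a ≤ b) :
    ∃ J : Order.Ideal L, J.IsPrime ∧ b ∈ J ∧ a ∉ J := by
  have hdisj : Disjoint (Order.PFilter.principal a : Set L) (Order.Ideal.principal b) :=
    Set.disjoint_left.2 fun _ hax hxb =>
      h ((Order.PFilter.mem_principal.1 hax).trans (Order.Ideal.mem_principal.1 hxb))
  obtain ⟨J, hJ, hbJ, haJ⟩ := DistribLattice.prime_ideal_of_disjoint_filter_ideal hdisj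
  exact ⟨J, hJ, hbJ Order.Ideal.mem_principal_self,
    Set.disjoint_left.1 haJ (Order.PFilter.mem_principal.2 le_rfl)⟩

theorem isAtom_le_compl_iff [BooleanAlgebra B] {e a : B} (he : IsAtom e) : e ≤ aᶜ ↔ ¬ e ≤ a := by
  rw [le_compl_iff_disjoint_right, he.not_le_iff_disjoint]

theorem notMem_ideal_iff_le [Lattice L] [BoundedOrder L] [BooleanAlgebra B]
    [DecidableRel ((· ≤ ·) : B → B → Prop)] {Z : Finset (L × B)} {e : B} (he : IsAtom e)
    {J : Order.Ideal L} (hjoin : atomJoin e Z ∈ J) (hmeet : atomMeet e Z ∉ J) {p : L × B}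
    (hp : p ∈ Z) : p.1 ∉ J ↔ e ≤ p.2 := by
  refine ⟨fun hpJ => ?_, fun hep hpJ => ?_⟩
  · by_contra hep
    have le_join : p.1 ≤ atomJoin e Z :=
      Finset.le_sup (Finset.mem_filter.2 ⟨hp, (isAtom_le_compl_iff he).2 hep⟩)
    exact hpJ (J.lower le_join hjoin)
  · have meet_le : atomMeet e Z ≤ p.1 := Finset.inf_le (Finset.mem_filter.2 ⟨hp, hep⟩)
    exact hmeet (J.lower meet_le hpJ)

theorem exists_hom_of_forall_not_atomMeet_le [DistribLattice L] [BoundedOrder L]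
    [CompleteAtomicBooleanAlgebra B] [DecidableRel ((· ≤ ·) : B → B → Prop)] {Z : Finset (L × B)}
    (h : ∀ e : B, IsAtom e → ¬ atomMeet e Z ≤ atomJoin e Z) :
    ∃ f : BoundedLatticeHom L B, ∀ p ∈ Z, f p.1 = p.2 := by
  choose J hJ hjoin hmeet using fun e : {e : B // IsAtom e} => exists_isPrime_of_not_le (h e e.2)
  let atoms : B ≃o Set {e : B // IsAtom e} := CompleteAtomicBooleanAlgebra.toSetOfIsAtom
  refine ⟨(atoms.symm : BoundedLatticeHom _ B).comp (stoneHom J hJ), fun p hp => ?_⟩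
  refine atoms.symm_apply_eq.2 (Set.ext fun e => ?_)
  exact notMem_ideal_iff_le e.2 (hjoin e) (hmeet e) hp

theorem not_atomMeet_le_atomJoin [Lattice L] [BoundedOrder L] [BooleanAlgebra B]
    [DecidableRel ((· ≤ ·) : B → B → Prop)] {Z : Finset (L × B)} (f : BoundedLatticeHom L B)
    (hf : ∀ p ∈ Z, f p.1 = p.2) {e : B} (he : e ≠ ⊥) : ¬ atomMeet e Z ≤ atomJoin e Z := by
  intro hle
  have le_map_meet : e ≤ f (atomMeet e Z) := by
    rw [atomMeet, map_finset_inf]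
    refine Finset.le_inf fun p hp => ?_
    obtain ⟨hpZ, hep⟩ := Finset.mem_filter.1 hp
    exact hep.trans_eq (hf p hpZ).symm
  have map_join_le : f (atomJoin e Z) ≤ eᶜ := by
    rw [atomJoin, map_finset_sup]
    refine Finset.sup_le fun p hp => ?_
    obtain ⟨hpZ, hep⟩ := Finset.mem_filter.1 hp
    exact (hf p hpZ).trans_le (le_compl_comm.1 hep)
  have le_compl_e : e ≤ eᶜ :=
    calc e ≤ f (atomMeet e Z) := le_map_meet
      _ ≤ f (atomJoin e Z) := OrderHomClass.mono f hle
      _ ≤ eᶜ := map_join_le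
  exact he (le_compl_self.1 le_compl_e)

theorem exists_hom_iff_forall_not_atomMeet_le [DistribLattice L] [BoundedOrder L]
    [CompleteAtomicBooleanAlgebra B] [DecidableRel ((· ≤ ·) : B → B → Prop)] {Z : Finset (L × B)} :
    (∃ f : BoundedLatticeHom L B, ∀ p ∈ Z, f p.1 = p.2) ↔
      ∀ e : B, IsAtom e → ¬ atomMeet e Z ≤ atomJoin e Z :=
  ⟨fun ⟨f, hf⟩ _ he => not_atomMeet_le_atomJoin f hf he.ne_bot,
    exists_hom_of_forall_not_atomMeet_le⟩

end Extension

theorem stmt8 {L B : Type*} [DistribLattice L] [BoundedOrder L] [BooleanAlgebra B]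
    [Fintype B] [DecidableEq L] [DecidableEq B] [DecidableRel ((· ≤ ·) : B → B → Prop)]
    (X : Finset (L × B)) (k : ℕ) (y : Fin k → L) (b : Fin k → B) :
    LatticeEntails L B X (Finset.univ.image fun i => (y i, b i)) ↔
      ∀ b' : Fin k → B, (∀ i, b' i ≠ b i) →
        ∃ e : B, IsAtom e ∧
          atomMeet e (X ∪ Finset.univ.image fun i => (y i, b' i)) ≤
          atomJoin e (X ∪ Finset.univ.image fun i => (y i, b' i)) := by
  let := Fintype.toCompleteAtomicBooleanAlgebra B
  have agrees_iff (f : BoundedLatticeHom L B) (b' : Fin k → B) :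
      (∀ p ∈ X ∪ Finset.univ.image fun i => (y i, b' i), f p.1 = p.2) ↔
        (∀ p ∈ X, f p.1 = p.2) ∧ ∀ i, f (y i) = b' i := by
    simp only [Finset.forall_mem_union, Finset.forall_mem_image, Finset.mem_univ, forall_const]
  rw [latticeEntails_iff_forall_hom]
  simp only [Finset.exists_mem_image, Finset.mem_univ, true_and]
  constructor
  · intro h b' hb'
    by_contra! hno
    obtain ⟨f, hf⟩ := exists_hom_iff_forall_not_atomMeet_le.2 hno
    obtain ⟨hfX, hfy⟩ := (agrees_iff f b').1 hf
    obtain ⟨i, hi⟩ := h f hfX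
    exact hb' i ((hfy i).symm.trans hi)
  · intro h f hfX
    by_contra! hne
    obtain ⟨e, he, hle⟩ := h (fun i => f (y i)) hne
    have hf := (agrees_iff f (fun i => f (y i))).2 ⟨hfX, fun _ => rfl⟩
    exact exists_hom_iff_forall_not_atomMeet_le.1 ⟨f, hf⟩ e he hle
end

section
/- (Sikorski's theorem for finite Boolean algebras.) Every finite Boolean algebra B is injective in the category of bounded distributive lattices: for every injective bounded lattice homomorphism φ : L → L' between bounded distributive lattices and every bounded lattice homomorphism α : L → B, there exists a bounded lattice homomorphism β : L' → B such that β ∘ φ = α. -/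
/-!
The two-element lattice `Prop` is injective: a homomorphism to `Prop` is a prime ideal, and a prime
ideal `I` of `L ⊆ L'` extends to `L'`, because a prime ideal of `L'` which contains `I` and avoids
`L \ I` contracts to `I`. Powers of injectives are injective, and a complete atomic Boolean algebra
is the power of `Prop` indexed by its atoms.
-/

open Order Function

universe u v w

section PrimeIdeal

theorem isIdeal_lowerClosure {P : Type*} [Preorder P] {s : Set P} (hne : s.Nonempty)
    (hs : DirectedOn (· ≤ ·) s) : IsIdeal (lowerClosure s : Set P) where
  IsLowerSet := (lowerClosure s).lower
  Nonempty := hne.mono subset_lowerClosure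
  Directed := by
    rintro x ⟨a, ha, hxa⟩ y ⟨b, hb, hyb⟩
    obtain ⟨c, hc, hac, hbc⟩ := hs a ha b hb
    exact ⟨c, subset_lowerClosure hc, hxa.trans hac, hyb.trans hbc⟩

theorem isPFilter_upperClosure {P : Type*} [Preorder P] {s : Set P} (hne : s.Nonempty)
    (hs : DirectedOn (· ≥ ·) s) : IsPFilter (upperClosure s : Set P) :=
  isIdeal_lowerClosure (P := Pᵒᵈ) hne hs

theorem exists_isPrime_apply_mem_iff {P D : Type*} [Preorder P] [DistribLattice D] (f : P ↪o D)
    (I : Ideal P) [hI : I.IsPrime] : ∃ J : Ideal D, J.IsPrime ∧ ∀ x, f x ∈ J ↔ x ∈ I := by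
  let F : PFilter P := hI.compl_filter.toPFilter
  have ideal_image : IsIdeal (lowerClosure (f '' I) : Set D) :=
    isIdeal_lowerClosure (I.nonempty.image f) (I.directed.mono_comp f.monotone)
  have filter_image : IsPFilter (upperClosure (f '' F) : Set D) :=
    isPFilter_upperClosure (F.nonempty.image f) (F.directed.mono_comp fun _ _ h => f.monotone h)
  have disjoint_images :
      Disjoint (filter_image.toPFilter : Set D) (ideal_image.toIdeal : Set D) := by
    rw [Set.disjoint_left]
    rintro y ⟨_, ⟨a, ha, rfl⟩, hay⟩ ⟨_, ⟨b, hb, rfl⟩, hyb⟩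
    exact ha (I.lower (f.le_iff_le.1 (hay.trans hyb)) hb)
  obtain ⟨J, hJ, hIJ, hFJ⟩ :=
    DistribLattice.prime_ideal_of_disjoint_filter_ideal disjoint_images
  refine ⟨J, hJ, fun x => ⟨fun hxJ => ?_, fun hxI => ?_⟩⟩
  · by_contra hxI
    exact Set.disjoint_left.1 hFJ (subset_upperClosure (Set.mem_image_of_mem f hxI)) hxJ
  · exact hIJ (subset_lowerClosure (Set.mem_image_of_mem f hxI))

theorem inf_mem_iff_of_isPrime {P : Type*} [SemilatticeInf P] {I : Ideal P} (hI : I.IsPrime)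
    {x y : P} : x ⊓ y ∈ I ↔ x ∈ I ∨ y ∈ I :=
  ⟨hI.mem_or_mem, Or.rec (I.lower inf_le_left) (I.lower inf_le_right)⟩

variable {L : Type*} [Lattice L] [BoundedOrder L]

/-- The kernel of a homomorphism to the two-element lattice, which is modelled by `Prop`. -/
def kerIdeal (χ : BoundedLatticeHom L Prop) : Ideal L where
  carrier := {x | ¬χ x}
  lower' _ _ hyx hx hy := hx (OrderHomClass.mono χ hyx hy)
  nonempty' := ⟨⊥, by simp⟩
  directed' x hx y hy := ⟨x ⊔ y, by simpa using ⟨hx, hy⟩, le_sup_left, le_sup_right⟩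

theorem mem_kerIdeal {χ : BoundedLatticeHom L Prop} {x : L} : x ∈ kerIdeal χ ↔ ¬χ x :=
  Iff.rfl

instance isPrime_kerIdeal (χ : BoundedLatticeHom L Prop) : (kerIdeal χ).IsPrime :=
  have : (kerIdeal χ).IsProper := Ideal.isProper_of_notMem (p := ⊤) (by simp [mem_kerIdeal])
  .of_mem_or_mem fun {x y} => by simp [mem_kerIdeal, imp_iff_not_or]

/-- The characteristic homomorphism of the complement of a prime ideal. -/
def primeIdealHom (I : Ideal L) [hI : I.IsPrime] : BoundedLatticeHom L Prop where
  toFun x := x ∉ I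
  map_sup' x y := by simp only [Ideal.sup_mem_iff, not_and_or, sup_Prop_eq]
  map_inf' x y := by simp only [inf_mem_iff_of_isPrime hI, not_or, inf_Prop_eq]
  map_top' := eq_true (Ideal.isProper_iff_top_notMem.1 hI.toIsProper)
  map_bot' := eq_false (not_not_intro I.bot_mem)

end PrimeIdeal

section Pi

variable {ι L : Type*} {B : ι → Type*} [Lattice L] [BoundedOrder L] [∀ i, Lattice (B i)]
  [∀ i, BoundedOrder (B i)]

/-- The `i`-th projection of a product of bounded lattices. -/
def piEvalHom (i : ι) : BoundedLatticeHom (∀ i, B i) (B i) where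
  toLatticeHom := Pi.evalLatticeHom i
  map_top' := rfl
  map_bot' := rfl

/-- The homomorphism to a product of bounded lattices with given components. -/
def piLiftHom (f : ∀ i, BoundedLatticeHom L (B i)) : BoundedLatticeHom L (∀ i, B i) where
  toFun x i := f i x
  map_sup' x y := funext fun i => map_sup (f i) x y
  map_inf' x y := funext fun i => map_inf (f i) x y
  map_top' := funext fun i => map_top (f i)
  map_bot' := funext fun i => map_bot (f i)

end Pi

/-- Injectivity of a bounded lattice in the category of bounded distributive lattices, tested on
embeddings of lattices in `Type u` into lattices in `Type v`. -/
def IsInjectiveBddDistLat (B : Type w) [Lattice B] [BoundedOrder B] : Prop :=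
  ∀ ⦃L : Type u⦄ ⦃L' : Type v⦄ [DistribLattice L] [BoundedOrder L] [DistribLattice L']
    [BoundedOrder L'] (φ : BoundedLatticeHom L L'), Injective φ →
    ∀ α : BoundedLatticeHom L B, ∃ β : BoundedLatticeHom L' B, ∀ x, β (φ x) = α x

namespace IsInjectiveBddDistLat

theorem prop : IsInjectiveBddDistLat.{u, v} Prop := by
  intro L L' _ _ _ _ φ hφ α
  obtain ⟨J, hJ, mem_iff⟩ :=
    exists_isPrime_apply_mem_iff (orderEmbeddingOfInjective φ hφ) (kerIdeal α)
  refine ⟨primeIdealHom J, fun x => propext ?_⟩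
  exact (not_congr (mem_iff x)).trans not_not

theorem pi {ι : Type*} {B : ι → Type*} [∀ i, Lattice (B i)] [∀ i, BoundedOrder (B i)]
    (h : ∀ i, IsInjectiveBddDistLat.{u, v} (B i)) : IsInjectiveBddDistLat.{u, v} (∀ i, B i) := by
  intro L L' _ _ _ _ φ hφ α
  choose β hβ using fun i => h i φ hφ ((piEvalHom i).comp α)
  exact ⟨piLiftHom β, fun x => funext fun i => hβ i x⟩

variable {A B : Type*} [Lattice A] [BoundedOrder A] [Lattice B] [BoundedOrder B]

theorem of_leftInverse (hB : IsInjectiveBddDistLat.{u, v} B) (s : BoundedLatticeHom A B)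
    (r : BoundedLatticeHom B A) (hrs : LeftInverse r s) : IsInjectiveBddDistLat.{u, v} A := by
  intro L L' _ _ _ _ φ hφ α
  obtain ⟨β, hβ⟩ := hB φ hφ (s.comp α)
  refine ⟨r.comp β, fun x => ?_⟩
  calc r (β (φ x)) = r (s (α x)) := congrArg r (hβ x)
    _ = α x := hrs (α x)

theorem of_orderIso (hB : IsInjectiveBddDistLat.{u, v} B) (e : A ≃o B) :
    IsInjectiveBddDistLat.{u, v} A :=
  hB.of_leftInverse (e : BoundedLatticeHom A B) (e.symm : BoundedLatticeHom B A) e.symm_apply_apply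

theorem set (ι : Type*) : IsInjectiveBddDistLat.{u, v} (Set ι) :=
  pi fun _ : ι => prop

end IsInjectiveBddDistLat

theorem stmt15_general {B : Type*} [CompleteAtomicBooleanAlgebra B] :
    IsInjectiveBddDistLat.{u, v} B :=
  (IsInjectiveBddDistLat.set {a : B // IsAtom a}).of_orderIso
    CompleteAtomicBooleanAlgebra.toSetOfIsAtom

theorem stmt15 {B : Type*} [BooleanAlgebra B] [Fintype B]
    {L L' : Type*} [DistribLattice L] [BoundedOrder L] [DistribLattice L'] [BoundedOrder L']
    (φ : BoundedLatticeHom L L') (hφ : Function.Injective φ)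
    (α : BoundedLatticeHom L B) :
    ∃ β : BoundedLatticeHom L' B, ∀ x : L, β (φ x) = α x := by
  let := Fintype.toCompleteAtomicBooleanAlgebra B
  exact stmt15_general φ hφ α
end
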